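/- Let q ∈ ℋ_c, let q(±∞) be its limits at ±∞, let f(x) = ψ(x)^{-1}∫_{−∞}^{x}(q(y) − Φ(q))ψ(y)dy, f¹(x) = ψ(x)^{-1}∫_{−∞}^{x}(y·q(y) − Φ(v·q(v)))ψ(y)dy, and define (f¹)'(x) = x·f¹(x) + x·q(x) − Φ(v·q(v)). Then for all x ∈ ℝ: (a) |x·f(x)| ≤ max{q(−∞) − Φ(q), Φ(q) − q(+∞)} ≤ 1; (b) |f¹(x)| ≤ max{q(−∞), q(+∞)} ≤ 1; (c) |(f¹)'(x)| ≤ |x| + 1/√(2π). -/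

import Mathlib

open MeasureTheory Filter

/-- Density of the standard normal distribution. -/
noncomputable def gaussD (x : ℝ) : ℝ := (Real.sqrt (2 * Real.pi))⁻¹ * Real.exp (-(x ^ 2) / 2)

/-- Expectation of `g` with respect to the standard normal distribution, `Φ(g)`. -/
noncomputable def PhiInt (g : ℝ → ℝ) : ℝ := ∫ x, g x * gaussD x

/-- The class `ℋ` of monotonically decreasing, left-continuous functions `ℝ → [0,1]`. -/
def memH (h : ℝ → ℝ) : Prop :=
  (∀ x, h x ∈ Set.Icc (0 : ℝ) 1) ∧ Antitone h ∧
    ∀ x, ContinuousWithinAt h (Set.Iic x) x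

/-- The class `ℋ_c` of members of `ℋ` that are continuous outside some compact interval. -/
def memHc (h : ℝ → ℝ) : Prop :=
  memH h ∧ ∃ K : ℝ, ContinuousOn h (Set.Icc (-K) K)ᶜ

/-- The Stein solution `f` for the function `q`. -/
noncomputable def steinF0 (q : ℝ → ℝ) (x : ℝ) : ℝ :=
  (gaussD x)⁻¹ * ∫ y in Set.Iic x, (q y - PhiInt q) * gaussD y

/-- The Stein solution `f¹` for the function `x·q(x)`. -/
noncomputable def steinF1 (q : ℝ → ℝ) (x : ℝ) : ℝ :=
  (gaussD x)⁻¹ * ∫ y in Set.Iic x, (y * q y - PhiInt (fun v => v * q v)) * gaussD y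

/-- `(f¹)'`, defined through Stein's equation. -/
noncomputable def steinF1' (q : ℝ → ℝ) (x : ℝ) : ℝ :=
  x * steinF1 q x + x * q x - PhiInt (fun v => v * q v)

/-!
Write `ψ` for the standard normal density and `P`, `Q` for its masses on `(-∞, x]` and `(x, ∞)`.
Since `P + Q = 1`, the Stein solution `F` of `h` satisfies
`ψ x * F x = Q * ∫_{y ≤ x} h ψ - P * ∫_{y > x} h ψ`, which makes it odd under the reflection
`h ↦ h (-·)`. The bound on `x * f x` then reduces to `x ≤ 0`, where it is Mills' inequality
`-x * P ≤ ψ x`.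

For antitone `q ≥ a` the point is `f¹ ≤ -a`; reflection (`q ↦ -q (-·)`) turns it into the lower
bound `-b ≤ f¹` for `q ≤ b`. As constants `c` have `f¹ = -c`, one may subtract `q (min x 0)` from
`q`. Afterwards `y * q y` is nonpositive on `(-∞, x]` and nonnegative on `(x, max x 0]`, so only the
integral over `(max x 0, ∞)` can make `f¹` positive, and it is controlled by
`P * ψ (max x 0) ≤ ψ x`.
-/

open Set ProbabilityTheory

lemma integrable_antitone_mul {q g : ℝ → ℝ} {a b : ℝ} (hq : Antitone q) (ha : ∀ y, a ≤ q y)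
    (hb : ∀ y, q y ≤ b) (hg : Integrable g) : Integrable fun y => q y * g y :=
  hg.bdd_mul hq.measurable.aestronglyMeasurable
    (.of_forall fun y => abs_le_max_abs_abs (ha y) (hb y))

section GaussianDensity

lemma gaussD_eq_gaussianPDFReal : gaussD = gaussianPDFReal 0 1 := by
  ext x
  simp [gaussD, gaussianPDFReal]

lemma gaussD_pos (x : ℝ) : 0 < gaussD x := by
  rw [gaussD_eq_gaussianPDFReal]
  exact gaussianPDFReal_pos 0 1 x one_ne_zero

lemma gaussD_zero : gaussD 0 = 1 / √(2 * Real.pi) := by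
  simp [gaussD]

lemma gaussD_neg (x : ℝ) : gaussD (-x) = gaussD x := by
  simp [gaussD]

lemma integrable_gaussD : Integrable gaussD := by
  rw [gaussD_eq_gaussianPDFReal]
  exact integrable_gaussianPDFReal 0 1

lemma integral_gaussD : ∫ x, gaussD x = 1 := by
  rw [gaussD_eq_gaussianPDFReal]
  exact integral_gaussianPDFReal_eq_one 0 one_ne_zero

lemma integrable_id_mul_gaussD : Integrable fun x => x * gaussD x := by
  refine ((integrable_mul_exp_neg_mul_sq (b := 1 / 2) (by norm_num)).const_mul
    (√(2 * Real.pi))⁻¹).congr (.of_forall fun x => ?_)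
  simp only [gaussD, show -(x ^ 2) / 2 = -(1 / 2) * x ^ 2 by ring]
  ring

lemma hasDerivAt_gaussD (x : ℝ) : HasDerivAt gaussD (-(x * gaussD x)) x := by
  have hexponent : HasDerivAt (fun y : ℝ => -(y ^ 2) / 2) (-x) x :=
    ((hasDerivAt_pow 2 x).fun_neg.div_const 2).congr_deriv (by ring)
  exact (hexponent.exp.const_mul (√(2 * Real.pi))⁻¹).congr_deriv (by rw [gaussD]; ring)

lemma tendsto_gaussD_atBot : Tendsto gaussD atBot (nhds 0) :=
  tendsto_zero_of_hasDerivAt_of_integrableOn_Iic (a := 0) (fun x _ => hasDerivAt_gaussD x)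
    integrable_id_mul_gaussD.neg.integrableOn integrable_gaussD.integrableOn

lemma setIntegral_Iic_id_mul_gaussD (x : ℝ) : ∫ y in Iic x, y * gaussD y = -gaussD x := by
  have h := integral_Iic_of_hasDerivAt_of_tendsto' (a := x) (fun y _ => hasDerivAt_gaussD y)
    integrable_id_mul_gaussD.neg.integrableOn tendsto_gaussD_atBot
  rw [integral_neg] at h
  linarith

lemma setIntegral_Ioi_id_mul_gaussD (x : ℝ) : ∫ y in Ioi x, y * gaussD y = gaussD x := by
  have h := integral_comp_neg_Ioi x fun y => y * gaussD y
  simp only [gaussD_neg, neg_mul, integral_neg, setIntegral_Iic_id_mul_gaussD] at h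
  linarith

lemma setIntegral_gaussD_nonneg (s : Set ℝ) : 0 ≤ ∫ y in s, gaussD y :=
  integral_nonneg fun y => (gaussD_pos y).le

lemma setIntegral_gaussD_le_one (s : Set ℝ) : ∫ y in s, gaussD y ≤ 1 :=
  integral_gaussD ▸
    setIntegral_le_integral integrable_gaussD (.of_forall fun y => (gaussD_pos y).le)

lemma setIntegral_Iic_add_Ioi_gaussD (x : ℝ) :
    (∫ y in Iic x, gaussD y) + ∫ y in Ioi x, gaussD y = 1 := by
  rw [intervalIntegral.integral_Iic_add_Ioi integrable_gaussD.integrableOn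
    integrable_gaussD.integrableOn, integral_gaussD]

lemma setIntegral_mul_gaussD_mono {s : Set ℝ} (hs : MeasurableSet s) {g h : ℝ → ℝ}
    (hg : IntegrableOn (fun y => g y * gaussD y) s) (hh : IntegrableOn (fun y => h y * gaussD y) s)
    (hgh : ∀ y ∈ s, g y ≤ h y) : ∫ y in s, g y * gaussD y ≤ ∫ y in s, h y * gaussD y :=
  setIntegral_mono_on hg hh hs fun y hy => mul_le_mul_of_nonneg_right (hgh y hy) (gaussD_pos y).le

lemma integrable_const_mul_id_mul_gaussD (a : ℝ) : Integrable fun y => a * y * gaussD y := by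
  simpa only [mul_assoc] using integrable_id_mul_gaussD.const_mul a

lemma setIntegral_Iic_const_mul_id_mul_gaussD (a x : ℝ) :
    ∫ y in Iic x, a * y * gaussD y = -(a * gaussD x) := by
  simp only [mul_assoc, integral_const_mul, setIntegral_Iic_id_mul_gaussD, mul_neg]

lemma setIntegral_Ioi_const_mul_id_mul_gaussD (a x : ℝ) :
    ∫ y in Ioi x, a * y * gaussD y = a * gaussD x := by
  simp only [mul_assoc, integral_const_mul, setIntegral_Ioi_id_mul_gaussD]

lemma neg_mul_setIntegral_Iic_gaussD_le (x : ℝ) : -x * ∫ y in Iic x, gaussD y ≤ gaussD x := by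
  calc -x * ∫ y in Iic x, gaussD y = ∫ y in Iic x, -x * gaussD y := (integral_const_mul _ _).symm
    _ ≤ ∫ y in Iic x, -1 * y * gaussD y :=
        setIntegral_mul_gaussD_mono measurableSet_Iic
          (integrable_gaussD.const_mul _).integrableOn
          (integrable_const_mul_id_mul_gaussD _).integrableOn
          fun y (hy : y ≤ x) => by linarith
    _ = gaussD x := by rw [setIntegral_Iic_const_mul_id_mul_gaussD]; ring

lemma gaussD_mul_gaussD_zero_le {x y : ℝ} (h : 0 ≤ x * (y - x)) :
    gaussD y * gaussD 0 ≤ gaussD x * gaussD (y - x) := by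
  simp only [gaussD, mul_mul_mul_comm _ (Real.exp _), ← Real.exp_add]
  exact mul_le_mul_of_nonneg_left (Real.exp_le_exp.2 (by linarith)) (by positivity)

lemma setIntegral_Iic_gaussD_mul_gaussD_zero_le {x : ℝ} (hx : x ≤ 0) :
    (∫ y in Iic x, gaussD y) * gaussD 0 ≤ gaussD x := by
  have hprod : Integrable fun y => gaussD x * gaussD (y - x) :=
    (integrable_gaussD.comp_sub_right x).const_mul _
  calc (∫ y in Iic x, gaussD y) * gaussD 0 = ∫ y in Iic x, gaussD y * gaussD 0 :=
        (integral_mul_const _ _).symm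
    _ ≤ ∫ y in Iic x, gaussD x * gaussD (y - x) :=
        setIntegral_mono_on (integrable_gaussD.mul_const _).integrableOn hprod.integrableOn
          measurableSet_Iic fun y hy =>
            gaussD_mul_gaussD_zero_le (mul_nonneg_of_nonpos_of_nonpos hx (sub_nonpos.2 hy))
    _ ≤ ∫ y, gaussD x * gaussD (y - x) :=
        setIntegral_le_integral hprod
          (.of_forall fun y => (mul_pos (gaussD_pos _) (gaussD_pos _)).le)
    _ = gaussD x := by
        rw [integral_const_mul, integral_sub_right_eq_self gaussD x, integral_gaussD, mul_one]

lemma setIntegral_Iic_gaussD_mul_gaussD_max_zero_le (x : ℝ) :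
    (∫ y in Iic x, gaussD y) * gaussD (max x 0) ≤ gaussD x := by
  rcases le_total x 0 with hx | hx
  · rw [max_eq_right hx]
    exact setIntegral_Iic_gaussD_mul_gaussD_zero_le hx
  · rw [max_eq_left hx]
    exact mul_le_of_le_one_left (gaussD_pos x).le (setIntegral_gaussD_le_one _)

end GaussianDensity

section SteinSolution

variable {h : ℝ → ℝ}

lemma PhiInt_comp_neg (h : ℝ → ℝ) : PhiInt (fun y => h (-y)) = PhiInt h := by
  simpa only [PhiInt, gaussD_neg] using integral_neg_eq_self (fun y => h y * gaussD y) volume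

lemma le_PhiInt {a : ℝ} (hh : Integrable fun y => h y * gaussD y) (ha : ∀ y, a ≤ h y) :
    a ≤ PhiInt h := by
  have := integral_mono (integrable_gaussD.const_mul a) hh
    fun y => mul_le_mul_of_nonneg_right (ha y) (gaussD_pos y).le
  rwa [integral_const_mul, integral_gaussD, mul_one] at this

lemma PhiInt_le {b : ℝ} (hh : Integrable fun y => h y * gaussD y) (hb : ∀ y, h y ≤ b) :
    PhiInt h ≤ b := by
  have := integral_mono hh (integrable_gaussD.const_mul b)
    fun y => mul_le_mul_of_nonneg_right (hb y) (gaussD_pos y).le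
  rwa [integral_const_mul, integral_gaussD, mul_one] at this

lemma PhiInt_eq_setIntegral_Iic_add_Ioi (hh : Integrable fun y => h y * gaussD y) (x : ℝ) :
    PhiInt h = (∫ y in Iic x, h y * gaussD y) + ∫ y in Ioi x, h y * gaussD y :=
  (intervalIntegral.integral_Iic_add_Ioi hh.integrableOn hh.integrableOn).symm

lemma gaussD_mul_steinF0 (hh : Integrable fun y => h y * gaussD y) (x : ℝ) :
    gaussD x * steinF0 h x =
      (∫ y in Ioi x, gaussD y) * (∫ y in Iic x, h y * gaussD y) -
        (∫ y in Iic x, gaussD y) * ∫ y in Ioi x, h y * gaussD y := by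
  rw [steinF0, mul_inv_cancel_left₀ (gaussD_pos x).ne']
  simp_rw [sub_mul]
  rw [integral_sub hh.integrableOn (integrable_gaussD.const_mul _).integrableOn,
    integral_const_mul, PhiInt_eq_setIntegral_Iic_add_Ioi hh x,
    ← sub_eq_of_eq_add' (setIntegral_Iic_add_Ioi_gaussD x).symm]
  ring

lemma steinF0_comp_neg (hh : Integrable fun y => h y * gaussD y) (x : ℝ) :
    steinF0 (fun y => h (-y)) x = -steinF0 h (-x) := by
  have hh' : Integrable fun y => h (-y) * gaussD y := by
    simpa only [gaussD_neg] using hh.comp_neg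
  have hIic := integral_comp_neg_Iic x fun y => h y * gaussD y
  have hIoi := integral_comp_neg_Ioi x fun y => h y * gaussD y
  have hP := integral_comp_neg_Iic x gaussD
  have hQ := integral_comp_neg_Ioi x gaussD
  simp only [gaussD_neg] at hIic hIoi hP hQ
  refine mul_left_cancel₀ (gaussD_pos x).ne' ?_
  rw [gaussD_mul_steinF0 hh', mul_neg, ← gaussD_neg x, gaussD_mul_steinF0 hh, hIic, hIoi, hP, hQ]
  ring

lemma abs_mul_steinF0_le_of_nonpos {M x : ℝ} (hM : ∀ y, |h y - PhiInt h| ≤ M) (hx : x ≤ 0) :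
    |x * steinF0 h x| ≤ M := by
  have hM0 : 0 ≤ M := (abs_nonneg _).trans (hM 0)
  have hbound : |∫ y in Iic x, (h y - PhiInt h) * gaussD y| ≤ M * ∫ y in Iic x, gaussD y := by
    rw [← integral_const_mul, ← Real.norm_eq_abs]
    refine norm_integral_le_of_norm_le (integrable_gaussD.const_mul M).integrableOn
      (.of_forall fun y => ?_)
    rw [norm_mul, Real.norm_of_nonneg (gaussD_pos y).le]
    exact mul_le_mul_of_nonneg_right (hM y) (gaussD_pos y).le
  rw [steinF0, ← div_eq_inv_mul, ← mul_div_assoc, abs_div, abs_of_pos (gaussD_pos x),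
    div_le_iff₀ (gaussD_pos x), abs_mul, abs_of_nonpos hx]
  calc -x * |∫ y in Iic x, (h y - PhiInt h) * gaussD y|
      ≤ -x * (M * ∫ y in Iic x, gaussD y) := mul_le_mul_of_nonneg_left hbound (neg_nonneg.2 hx)
    _ = M * (-x * ∫ y in Iic x, gaussD y) := by ring
    _ ≤ M * gaussD x := mul_le_mul_of_nonneg_left (neg_mul_setIntegral_Iic_gaussD_le x) hM0

lemma abs_mul_steinF0_le {M : ℝ} (hh : Integrable fun y => h y * gaussD y)
    (hM : ∀ y, |h y - PhiInt h| ≤ M) (x : ℝ) : |x * steinF0 h x| ≤ M := by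
  rcases le_total x 0 with hx | hx
  · exact abs_mul_steinF0_le_of_nonpos hM hx
  · have hreflect := abs_mul_steinF0_le_of_nonpos (h := fun y => h (-y)) (M := M)
      (fun y => by rw [PhiInt_comp_neg]; exact hM (-y)) (neg_nonpos.2 hx)
    rwa [steinF0_comp_neg hh, neg_neg, neg_mul_neg] at hreflect

lemma abs_mul_steinF0_le_max {a b : ℝ} (hh : Integrable fun y => h y * gaussD y)
    (ha : ∀ y, a ≤ h y) (hb : ∀ y, h y ≤ b) (x : ℝ) :
    |x * steinF0 h x| ≤ max (b - PhiInt h) (PhiInt h - a) := by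
  refine abs_mul_steinF0_le hh (fun y => abs_le'.2 ⟨?_, ?_⟩) x
  · exact le_max_of_le_left (by linarith [hb y])
  · exact le_max_of_le_right (by linarith [ha y])

end SteinSolution

section SteinSolutionIdMul

variable {q : ℝ → ℝ}

lemma steinF1_eq_steinF0 (q : ℝ → ℝ) : steinF1 q = steinF0 fun y => y * q y := rfl

lemma steinF1_sub_const (hq : Integrable fun y => y * q y * gaussD y) (c x : ℝ) :
    steinF1 (fun y => q y - c) x = steinF1 q x + c := by
  have hc := integrable_const_mul_id_mul_gaussD c
  have hsub : (fun y => y * (q y - c) * gaussD y) =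
      fun y => y * q y * gaussD y - c * y * gaussD y := by
    ext y
    ring
  refine mul_left_cancel₀ (gaussD_pos x).ne' ?_
  rw [mul_add, steinF1_eq_steinF0, steinF1_eq_steinF0,
    gaussD_mul_steinF0 (by rw [hsub]; exact hq.sub hc), gaussD_mul_steinF0 hq, hsub,
    integral_sub hq.integrableOn hc.integrableOn, integral_sub hq.integrableOn hc.integrableOn,
    setIntegral_Iic_const_mul_id_mul_gaussD, setIntegral_Ioi_const_mul_id_mul_gaussD]
  linear_combination c * gaussD x * setIntegral_Iic_add_Ioi_gaussD x

lemma steinF1_neg_comp_neg (hq : Integrable fun y => y * q y * gaussD y) (x : ℝ) :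
    steinF1 (fun y => -q (-y)) x = -steinF1 q (-x) := by
  rw [steinF1_eq_steinF0, steinF1_eq_steinF0, ← steinF0_comp_neg hq]
  simp only [mul_neg, neg_mul]

lemma mul_sub_min_zero_nonpos (hq : Antitone q) {x y : ℝ} (hyx : y ≤ x) :
    y * (q y - q (min x 0)) ≤ 0 := by
  rcases le_total y 0 with hy | hy
  · exact mul_nonpos_of_nonpos_of_nonneg hy (sub_nonneg.2 (hq (le_min hyx hy)))
  · exact mul_nonpos_of_nonneg_of_nonpos hy (sub_nonpos.2 (hq ((min_le_right x 0).trans hy)))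

lemma mul_sub_min_zero_nonneg (hq : Antitone q) {x y : ℝ} (hxy : x < y) (hy : y ≤ max x 0) :
    0 ≤ y * (q y - q (min x 0)) := by
  have hy0 : y ≤ 0 := (le_max_iff.1 hy).resolve_left hxy.not_ge
  exact mul_nonneg_of_nonpos_of_nonpos hy0 (sub_nonpos.2 (hq ((min_le_left x 0).trans hxy.le)))

lemma neg_mul_gaussD_max_zero_le_setIntegral_Ioi {a : ℝ} (hq : Antitone q) (ha : ∀ y, a ≤ q y)
    (x : ℝ) (hqi : Integrable fun y => y * (q y - q (min x 0)) * gaussD y) :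
    -((q (min x 0) - a) * gaussD (max x 0)) ≤
      ∫ y in Ioi x, y * (q y - q (min x 0)) * gaussD y := by
  have hIoc : 0 ≤ ∫ y in Ioc x (max x 0), y * (q y - q (min x 0)) * gaussD y :=
    setIntegral_nonneg measurableSet_Ioc fun y hy =>
      mul_nonneg (mul_sub_min_zero_nonneg hq hy.1 hy.2) (gaussD_pos y).le
  have hIoi : ∫ y in Ioi (max x 0), (a - q (min x 0)) * y * gaussD y ≤
      ∫ y in Ioi (max x 0), y * (q y - q (min x 0)) * gaussD y := by
    refine setIntegral_mul_gaussD_mono measurableSet_Ioi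
      (integrable_const_mul_id_mul_gaussD _).integrableOn hqi.integrableOn fun y hy => ?_
    rw [mul_comm]
    exact mul_le_mul_of_nonneg_left (by linarith [ha y]) ((le_max_right x 0).trans (le_of_lt hy))
  rw [← Ioc_union_Ioi_eq_Ioi (le_max_left x 0), setIntegral_union (Ioc_disjoint_Ioi le_rfl)
    measurableSet_Ioi hqi.integrableOn hqi.integrableOn]
  rw [setIntegral_Ioi_const_mul_id_mul_gaussD] at hIoi
  linarith

lemma steinF1_le_neg {a : ℝ} (hq : Antitone q) (ha : ∀ y, a ≤ q y)
    (hqi : Integrable fun y => y * q y * gaussD y) (x : ℝ) : steinF1 q x ≤ -a := by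
  set c := q (min x 0)
  have hqi' : Integrable fun y => y * (q y - c) * gaussD y :=
    (hqi.sub (integrable_const_mul_id_mul_gaussD c)).congr
      (.of_forall fun y => by simp only [Pi.sub_apply]; ring)
  have hleft : ∫ y in Iic x, y * (q y - c) * gaussD y ≤ 0 :=
    setIntegral_nonpos measurableSet_Iic fun y hy =>
      mul_nonpos_of_nonpos_of_nonneg (mul_sub_min_zero_nonpos hq hy) (gaussD_pos y).le
  have hright := neg_mul_gaussD_max_zero_le_setIntegral_Ioi hq ha x hqi'
  have hscaled : gaussD x * steinF1 (fun y => q y - c) x ≤ gaussD x * (c - a) := by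
    rw [steinF1_eq_steinF0, gaussD_mul_steinF0 hqi']
    calc (∫ y in Ioi x, gaussD y) * (∫ y in Iic x, y * (q y - c) * gaussD y) -
          (∫ y in Iic x, gaussD y) * ∫ y in Ioi x, y * (q y - c) * gaussD y
        ≤ 0 - (∫ y in Iic x, gaussD y) * -((c - a) * gaussD (max x 0)) :=
          sub_le_sub (mul_nonpos_of_nonneg_of_nonpos (setIntegral_gaussD_nonneg _) hleft)
            (mul_le_mul_of_nonneg_left hright (setIntegral_gaussD_nonneg _))
      _ = (c - a) * ((∫ y in Iic x, gaussD y) * gaussD (max x 0)) := by ring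
      _ ≤ (c - a) * gaussD x :=
          mul_le_mul_of_nonneg_left (setIntegral_Iic_gaussD_mul_gaussD_max_zero_le x)
            (sub_nonneg.2 (ha _))
      _ = gaussD x * (c - a) := mul_comm _ _
  rw [mul_le_mul_iff_right₀ (gaussD_pos x), steinF1_sub_const hqi] at hscaled
  linarith

lemma neg_le_steinF1 {b : ℝ} (hq : Antitone q) (hb : ∀ y, q y ≤ b)
    (hqi : Integrable fun y => y * q y * gaussD y) (x : ℝ) : -b ≤ steinF1 q x := by
  have hqi' : Integrable fun y => y * -q (-y) * gaussD y := by
    simpa only [gaussD_neg, neg_mul, mul_neg] using hqi.comp_neg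
  have hreflect := steinF1_le_neg (q := fun y => -q (-y))
    (fun y z hyz => neg_le_neg (hq (neg_le_neg hyz))) (fun y => neg_le_neg (hb (-y))) hqi' (-x)
  rw [steinF1_neg_comp_neg hqi, neg_neg] at hreflect
  linarith

lemma PhiInt_id_mul_nonpos (hq : Antitone q) (hqi : Integrable fun y => y * q y * gaussD y) :
    PhiInt (fun y => y * q y) ≤ 0 := by
  have hle : ∀ y, y * q y ≤ q 0 * y := fun y => by
    have := mul_sub_min_zero_nonpos hq (le_max_left y 0)
    rw [min_eq_right (le_max_right y 0)] at this
    linarith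
  have hIic := setIntegral_mul_gaussD_mono (measurableSet_Iic (a := 0)) hqi.integrableOn
    (integrable_const_mul_id_mul_gaussD (q 0)).integrableOn fun y _ => hle y
  have hIoi := setIntegral_mul_gaussD_mono (measurableSet_Ioi (a := 0)) hqi.integrableOn
    (integrable_const_mul_id_mul_gaussD (q 0)).integrableOn fun y _ => hle y
  rw [setIntegral_Iic_const_mul_id_mul_gaussD] at hIic
  rw [setIntegral_Ioi_const_mul_id_mul_gaussD] at hIoi
  rw [PhiInt_eq_setIntegral_Iic_add_Ioi hqi 0]
  linarith

lemma neg_mul_gaussD_zero_le_PhiInt_id_mul {a b : ℝ} (ha : ∀ y, a ≤ q y) (hb : ∀ y, q y ≤ b)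
    (hqi : Integrable fun y => y * q y * gaussD y) :
    -((b - a) * gaussD 0) ≤ PhiInt fun y => y * q y := by
  have hIic := setIntegral_mul_gaussD_mono measurableSet_Iic
    (integrable_const_mul_id_mul_gaussD b).integrableOn hqi.integrableOn
    fun y (hy : y ≤ 0) => by rw [mul_comm]; exact mul_le_mul_of_nonpos_left (hb y) hy
  have hIoi := setIntegral_mul_gaussD_mono measurableSet_Ioi
    (integrable_const_mul_id_mul_gaussD a).integrableOn hqi.integrableOn
    fun y (hy : 0 < y) => by rw [mul_comm]; exact mul_le_mul_of_nonneg_left (ha y) hy.le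
  rw [setIntegral_Iic_const_mul_id_mul_gaussD] at hIic
  rw [setIntegral_Ioi_const_mul_id_mul_gaussD] at hIoi
  rw [PhiInt_eq_setIntegral_Iic_add_Ioi hqi 0]
  linarith

lemma abs_steinF1'_le {a b : ℝ} (hq : Antitone q) (ha : ∀ y, a ≤ q y) (hb : ∀ y, q y ≤ b)
    (hqi : Integrable fun y => y * q y * gaussD y) (x : ℝ) :
    |steinF1' q x| ≤ (b - a) * (|x| + gaussD 0) := by
  have hsum : |steinF1 q x + q x| ≤ b - a :=
    abs_le.2 ⟨by linarith [neg_le_steinF1 hq hb hqi x, ha x],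
      by linarith [steinF1_le_neg hq ha hqi x, hb x]⟩
  have hmean : |PhiInt fun y => y * q y| ≤ (b - a) * gaussD 0 := by
    rw [abs_of_nonpos (PhiInt_id_mul_nonpos hq hqi)]
    linarith [neg_mul_gaussD_zero_le_PhiInt_id_mul ha hb hqi]
  calc |steinF1' q x| = |x * (steinF1 q x + q x) - PhiInt fun y => y * q y| := by
        rw [steinF1', mul_add]
    _ ≤ |x| * |steinF1 q x + q x| + |PhiInt fun y => y * q y| := by
        rw [← abs_mul]
        exact abs_sub _ _
    _ ≤ |x| * (b - a) + (b - a) * gaussD 0 :=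
        add_le_add (mul_le_mul_of_nonneg_left hsum (abs_nonneg x)) hmean
    _ = (b - a) * (|x| + gaussD 0) := by ring

end SteinSolutionIdMul

theorem stein_solution_bounds_general {q : ℝ → ℝ} (hq : Antitone q) {qp qm : ℝ}
    (hqp : Tendsto q atTop (nhds qp)) (hqm : Tendsto q atBot (nhds qm)) :
    (∀ x : ℝ, |x * steinF0 q x| ≤ max (qm - PhiInt q) (PhiInt q - qp)) ∧
    max (qm - PhiInt q) (PhiInt q - qp) ≤ qm - qp ∧
    (∀ x : ℝ, steinF1 q x ∈ Icc (-qm) (-qp)) ∧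
    (∀ x : ℝ, |steinF1' q x| ≤ (qm - qp) * (|x| + 1 / √(2 * Real.pi))) := by
  have hge : ∀ y, qp ≤ q y := hq.le_of_tendsto hqp
  have hle : ∀ y, q y ≤ qm := hq.ge_of_tendsto hqm
  have hqi := integrable_antitone_mul hq hge hle integrable_gaussD
  have hyqi : Integrable fun y => y * q y * gaussD y := by
    simpa only [mul_left_comm, mul_assoc] using
      integrable_antitone_mul hq hge hle integrable_id_mul_gaussD
  refine ⟨abs_mul_steinF0_le_max hqi hge hle, max_le ?_ ?_,
    fun x => ⟨neg_le_steinF1 hq hle hyqi x, steinF1_le_neg hq hge hyqi x⟩,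
    gaussD_zero ▸ abs_steinF1'_le hq hge hle hyqi⟩
  · exact sub_le_sub_left (le_PhiInt hqi hge) qm
  · exact sub_le_sub_right (PhiInt_le hqi hle) qp

/-- bounds on `x·f(x)`, `f¹(x)` and `(f¹)'(x)` for `q ∈ ℋ_c`. -/
theorem stein_solution_bounds (q : ℝ → ℝ) (hq : memHc q) (qp qm : ℝ)
    (hqp : Tendsto q atTop (nhds qp)) (hqm : Tendsto q atBot (nhds qm)) :
    (∀ x : ℝ, |x * steinF0 q x| ≤ max (qm - PhiInt q) (PhiInt q - qp)) ∧
    max (qm - PhiInt q) (PhiInt q - qp) ≤ 1 ∧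
    (∀ x : ℝ, |steinF1 q x| ≤ max qm qp) ∧
    max qm qp ≤ 1 ∧
    (∀ x : ℝ, |steinF1' q x| ≤ |x| + 1 / Real.sqrt (2 * Real.pi)) := by
  obtain ⟨hf, hmax, hf1, hf1'⟩ := stein_solution_bounds_general hq.1.2.1 hqp hqm
  have hqp_nonneg : 0 ≤ qp := ge_of_tendsto' hqp fun x => (hq.1.1 x).1
  have hqm_le_one : qm ≤ 1 := le_of_tendsto' hqm fun x => (hq.1.1 x).2
  have hqp_le_qm : qp ≤ qm := neg_le_neg_iff.1 ((hf1 0).1.trans (hf1 0).2)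
  rw [max_eq_left hqp_le_qm]
  exact ⟨hf, by linarith, fun x => abs_le.2 ⟨(hf1 x).1, by linarith [(hf1 x).2]⟩, hqm_le_one,
    fun x => (hf1' x).trans (mul_le_of_le_one_left (by positivity) (by linarith))⟩
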